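/- The ⊑-minimal elements of P^I_{A,b} = {z ∈ ℤ^n_+ : Az = b} (equivalently, its ≤-minimal elements in the componentwise order on ℤ^n_+) correspond exactly to the elements (z,u) with u = 1 of the Hilbert basis of the monoid {(z,u) ∈ ℤ^{n+1}_+ : Az − bu = 0}; in particular, if (z,1) is an irreducible (non-trivially-decomposable) element of this monoid, then z is a ≤-minimal element of P^I_{A,b}, and conversely. -/

import Mathlib

def sqle {n : ℕ} (u v : Fin n → ℤ) : Prop :=
  ∀ j, 0 ≤ u j * v j ∧ |u j| ≤ |v j|

def QF {d n : ℕ} (A : Matrix (Fin d) (Fin n) ℤ) (b : Fin d → ℤ) : Set (Fin n → ℤ) :=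
  {z | A.mulVec z = b}

def PF {d n : ℕ} (A : Matrix (Fin d) (Fin n) ℤ) (b : Fin d → ℤ) : Set (Fin n → ℤ) :=
  {z | A.mulVec z = b ∧ 0 ≤ z}

def oplus {n : ℕ} (S T U : Set (Fin n → ℤ)) : Prop :=
  ∀ z ∈ S, ∃ z₁ ∈ T, ∃ z₂ ∈ U, sqle z₁ z ∧ sqle z₂ z ∧ z = z₁ + z₂

theorem min_iff_hilbert_basis_elem {d n : ℕ} (A : Matrix (Fin d) (Fin n) ℤ)
    (b : Fin d → ℤ) (z : Fin n → ℤ) (hz : z ∈ PF A b) :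
    (∀ z' ∈ PF A b, z' ≤ z → z' = z) ↔
      (∀ (z₁ z₂ : Fin n → ℤ) (u₁ u₂ : ℤ),
        0 ≤ z₁ → 0 ≤ u₁ → A.mulVec z₁ = u₁ • b →
        0 ≤ z₂ → 0 ≤ u₂ → A.mulVec z₂ = u₂ • b →
        z = z₁ + z₂ → (1 : ℤ) = u₁ + u₂ →
        (z₁ = 0 ∧ u₁ = 0) ∨ (z₂ = 0 ∧ u₂ = 0)) := by
  constructor
  · intro h z₁ z₂ u₁ u₂ hz₁ hu₁ hA₁ hz₂ hu₂ hA₂ hsum hu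
    have hcase : (u₁ = 0 ∧ u₂ = 1) ∨ (u₁ = 1 ∧ u₂ = 0) := by omega
    rcases hcase with ⟨h1, h2⟩ | ⟨h1, h2⟩
    · left
      subst h1 h2
      have hle : z₂ ≤ z := by rw [hsum]; exact le_add_of_nonneg_left hz₁
      have e := h z₂ ⟨by simpa using hA₂, hz₂⟩ hle
      refine ⟨?_, rfl⟩
      rw [e] at hsum
      exact right_eq_add.mp hsum
    · right
      subst h1 h2
      have hle : z₁ ≤ z := by rw [hsum]; exact le_add_of_nonneg_right hz₂
      have e := h z₁ ⟨by simpa using hA₁, hz₁⟩ hle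
      refine ⟨?_, rfl⟩
      rw [e] at hsum
      exact left_eq_add.mp hsum
  · intro h z' hz' hle
    have key := h (z - z') z' 0 1 (sub_nonneg.mpr hle) le_rfl
      (by rw [Matrix.mulVec_sub, hz.1, hz'.1]; simp) hz'.2 zero_le_one
      (by rw [hz'.1]; simp) (by simp) (by norm_num)
    rcases key with ⟨h1, _⟩ | ⟨_, h2⟩
    · exact (sub_eq_zero.mp h1).symm
    · exact absurd h2 one_ne_zero
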